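/- Let n, a, k be strictly positive integers and let Q ⊆ ℝⁿ be a convex polytope all of whose vertices lie in ℤⁿ, such that the interior of Q contains exactly k points of the sublattice a·ℤⁿ. Then vol(Q) ≤ k·aⁿ·(7(ka+1))^{n·2^{n+1}}. -/

import Mathlib

/-!
Let `n` be the dimension and `x = ∑ wᵢ vᵢ` a point of `a • Λ` interior to the lattice polytope `Q`,
written with positive weights on affinely independent vertices, one of which may be prescribed.
If, for a proper subset `T` of the indices, the product of the `wᵢ / (k a)` over `T` exceeded the
sum of the `wᵢ` outside `T`, then Minkowski's theorem on linear forms would give integers `pᵢ`,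
zero outside `T` and with sum `q > 0`, such that `|pᵢ - q wᵢ| < wᵢ / (k a)` on `T`. The nonzero
lattice vector `d = q x - ∑ pᵢ vᵢ` then puts the `k + 1` points `x + j a d`, `0 ≤ j ≤ k`, of
`a • Λ` into the interior of `Q`. So no such `T` exists, and this forces every weight to be at
least `ε = (4 k a) ^ (-2 ^ (n + 1))`. As every vertex can be prescribed, `x + ε (u - u')` is
interior to `Q` for all interior points `u`, `u'`, and Blichfeldt's theorem with multiplicity `k`,
applied to `(ε / a) • Q`, bounds the volume.
-/

open MeasureTheory Module
open scoped Pointwise ENNReal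

section GeometryOfNumbers

theorem exists_lt_card_forall_vadd_mem {G X : Type*} [AddGroup G] [Countable G] [AddAction G X]
    [MeasurableSpace G] [MeasurableSpace X] [MeasurableVAdd G X] {μ : Measure X}
    [VAddInvariantMeasure G X μ] {F s : Set X} (hF : IsAddFundamentalDomain G F μ)
    (hs : NullMeasurableSet s μ) {k : ℕ} (h : k * μ F < μ s) :
    ∃ (x : X) (t : Finset G), k < t.card ∧ ∀ g ∈ t, g +ᵥ x ∈ s := by
  classical
  contrapose! h
  have hmult (x : X) : ∑' g : G, s.indicator (1 : X → ℝ≥0∞) (g +ᵥ x) ≤ k := by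
    refine ENNReal.tsum_eq_iSup_sum.trans_le (iSup_le fun t ↦ ?_)
    simp only [Set.indicator_apply, Pi.one_apply, Finset.sum_boole]
    by_contra! hlt
    obtain ⟨g, hg, hgs⟩ := h x {g ∈ t | g +ᵥ x ∈ s} (by exact_mod_cast hlt)
    exact hgs (Finset.mem_filter.1 hg).2
  have hmeas (g : G) :
      AEMeasurable (fun x ↦ s.indicator (1 : X → ℝ≥0∞) (g +ᵥ x)) (μ.restrict F) :=
    ((aemeasurable_one.indicator₀ hs).comp_quasiMeasurePreserving
      (measurePreserving_vadd g μ).quasiMeasurePreserving).restrict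
  calc
    μ s = ∑' g : G, ∫⁻ x in F, s.indicator 1 (g +ᵥ x) ∂μ := by
      rw [← lintegral_indicator_one₀ hs, hF.lintegral_eq_tsum'']
    _ = ∫⁻ x in F, ∑' g : G, s.indicator 1 (g +ᵥ x) ∂μ := (lintegral_tsum hmeas).symm
    _ ≤ ∫⁻ _ in F, k ∂μ := lintegral_mono hmult
    _ = k * μ F := by rw [setLIntegral_const]

theorem measure_le_of_forall_add_smul_sub_mem {E : Type*} [NormedAddCommGroup E] [NormedSpace ℝ E]
    [FiniteDimensional ℝ E] [MeasurableSpace E] [BorelSpace E] {μ : Measure E}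
    [μ.IsAddHaarMeasure] {Λ : AddSubgroup E} [Countable Λ] {F : Set E}
    (hF : IsAddFundamentalDomain Λ F μ) {a k : ℕ} (ha : 0 < a) {A U : Set E}
    (hcard : (A ∩ (a • Λ : AddSubgroup E)).encard ≤ k) {x : E} (hx : x ∈ a • Λ)
    (hU : MeasurableSet U) {ε : ℝ} (hε : 0 < ε)
    (h : ∀ u ∈ U, ∀ u' ∈ U, x + ε • (u - u') ∈ A) :
    μ U ≤ ENNReal.ofReal (k * (a / ε) ^ finrank ℝ E) * μ F := by
  have ha' : (0 : ℝ) < a := by exact_mod_cast ha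
  have hscale : μ U = ENNReal.ofReal ((a / ε) ^ finrank ℝ E) * μ ((ε / a) • U) := by
    rw [← Measure.addHaar_smul_of_nonneg μ (by positivity), smul_smul,
      div_mul_div_cancel₀ hε.ne', div_self ha'.ne', one_smul]
  suffices μ ((ε / a) • U) ≤ k * μ F by
    rw [hscale, mul_comm (k : ℝ), ENNReal.ofReal_mul (by positivity), ENNReal.ofReal_natCast,
      mul_assoc]
    gcongr
  by_contra! hlt
  obtain ⟨y, t, htk, ht⟩ := exists_lt_card_forall_vadd_mem hF
    (hU.const_smul₀ (ε / a)).nullMeasurableSet hlt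
  obtain ⟨g₀, hg₀⟩ : t.Nonempty := Finset.card_pos.1 (by lia)
  have hmaps : Set.MapsTo (fun g : Λ ↦ x + (a : ℝ) • ((g : E) - g₀)) t
      (A ∩ (a • Λ : AddSubgroup E)) := by
    intro g hg
    obtain ⟨u, hu, hgu⟩ := ht g hg
    obtain ⟨u₀, hu₀, hgu₀⟩ := ht g₀ hg₀
    have hdiff : (g : E) - g₀ = (ε / a) • (u - u₀) := by
      rw [smul_sub]
      simp only [AddSubgroup.vadd_def, vadd_eq_add] at hgu hgu₀
      rw [hgu, hgu₀, add_sub_add_right_eq_sub]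
    constructor
    · simpa only [hdiff, smul_smul, mul_div_cancel₀ _ ha'.ne'] using h u hu u₀ hu₀
    · simp only [Nat.cast_smul_eq_nsmul]
      exact add_mem hx (AddSubgroup.smul_mem_pointwise_smul _ _ _ (sub_mem g.2 g₀.2))
  have hinj : Function.Injective fun g : Λ ↦ x + (a : ℝ) • ((g : E) - g₀) := fun g g' hgg' ↦
    Subtype.ext (sub_left_injective (smul_right_injective E ha'.ne' (add_left_cancel hgg')))
  have hle := (Set.encard_le_encard_of_injOn hmaps hinj.injOn).trans hcard
  rw [Set.encard_coe_eq_coe_finsetCard, Nat.cast_le] at hle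
  exact hle.not_gt htk

/-- The lattice `ℤ^ι` of integer points of `ℝ^ι`, as an additive subgroup so that it fits the
library's theorems on fundamental domains. -/
def integerLattice (ι : Type*) [Finite ι] : AddSubgroup (ι → ℝ) :=
  (Submodule.span ℤ (Set.range (Pi.basisFun ℝ ι))).toAddSubgroup

instance (ι : Type*) [Finite ι] : Countable (integerLattice ι) :=
  inferInstanceAs (Countable (Submodule.span ℤ (Set.range (Pi.basisFun ℝ ι))))

theorem mem_integerLattice {ι : Type*} [Finite ι] {x : ι → ℝ} :
    x ∈ integerLattice ι ↔ ∀ i, ∃ m : ℤ, x i = m := by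
  have := Fintype.ofFinite ι
  refine ((Pi.basisFun ℝ ι).mem_span_iff_repr_mem ℤ x).trans (forall_congr' fun i ↦ ?_)
  simp only [Pi.basisFun_repr, Set.mem_range, algebraMap_int_eq, eq_intCast, eq_comm]

theorem mem_nsmul_integerLattice {ι : Type*} [Finite ι] {a : ℕ} {x : ι → ℝ} :
    x ∈ a • integerLattice ι ↔ ∀ i, ∃ m : ℤ, x i = a * m := by
  simp only [AddSubgroup.mem_smul_pointwise_iff_exists, mem_integerLattice]
  constructor
  · rintro ⟨y, hy, rfl⟩ i
    obtain ⟨m, hm⟩ := hy i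
    exact ⟨m, by simp [hm]⟩
  · intro h
    choose m hm using h
    exact ⟨fun i ↦ m i, fun i ↦ ⟨m i, rfl⟩, funext fun i ↦ by simp [hm]⟩

theorem isAddFundamentalDomain_integerLattice (ι : Type*) [Fintype ι] :
    IsAddFundamentalDomain (integerLattice ι) (ZSpan.fundamentalDomain (Pi.basisFun ℝ ι)) volume :=
  ZSpan.isAddFundamentalDomain' _ _

theorem volume_fundamentalDomain_basisFun (ι : Type*) [Fintype ι] :
    volume (ZSpan.fundamentalDomain (Pi.basisFun ℝ ι)) = 1 := by
  simp [ZSpan.fundamentalDomain_pi_basisFun, volume_pi_pi]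

theorem exists_int_ne_zero_abs_mulVec_lt {ι : Type*} [Fintype ι] [DecidableEq ι]
    {M : Matrix ι ι ℝ} (hM : M.det ≠ 0) {δ : ι → ℝ} (hδ : ∀ i, 0 < δ i)
    (h : |M.det| < ∏ i, δ i) :
    ∃ p : ι → ℤ, p ≠ 0 ∧ ∀ i, |M.mulVec (fun j ↦ (p j : ℝ)) i| < δ i := by
  let B : Set (ι → ℝ) := Set.univ.pi fun i ↦ Set.Ioo (-δ i) (δ i)
  have hmemB {x : ι → ℝ} : x ∈ B ↔ ∀ i, |x i| < δ i := by simp [B, abs_lt]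
  have hvolB : volume B = ENNReal.ofReal (2 ^ Fintype.card ι * ∏ i, δ i) := by
    rw [Real.volume_pi_Ioo, ← ENNReal.ofReal_prod_of_nonneg fun i _ ↦ by linarith [hδ i]]
    simp only [sub_neg_eq_add, ← two_mul, Finset.prod_mul_distrib, Finset.prod_const,
      Finset.card_univ]
  have hvol : volume (ZSpan.fundamentalDomain (Pi.basisFun ℝ ι)) * 2 ^ finrank ℝ (ι → ℝ) <
      volume (M.toLin' ⁻¹' B) := by
    rw [volume_fundamentalDomain_basisFun, one_mul, finrank_fintype_fun_eq_card,
      Measure.addHaar_preimage_linearMap _ (by rwa [LinearMap.det_toLin']),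
      LinearMap.det_toLin', hvolB, ← ENNReal.ofReal_mul (abs_nonneg _),
      ← ENNReal.ofReal_ofNat, ← ENNReal.ofReal_pow zero_le_two,
      ENNReal.ofReal_lt_ofReal_iff_of_nonneg (by positivity), abs_inv,
      inv_mul_eq_div, lt_div_iff₀ (abs_pos.2 hM)]
    gcongr
  obtain ⟨x, hx0, hx⟩ := exists_ne_zero_mem_lattice_of_measure_mul_two_pow_lt_measure
    (isAddFundamentalDomain_integerLattice ι)
    (fun x hx ↦ by simpa only [Set.mem_preimage, map_neg, hmemB, Pi.neg_apply, abs_neg] using hx)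
    ((convex_pi fun i _ ↦ convex_Ioo _ _).linear_preimage M.toLin') hvol
  choose p hp using mem_integerLattice.1 x.2
  have hpx : (x : ι → ℝ) = fun i ↦ (p i : ℝ) := funext hp
  refine ⟨p, ?_, ?_⟩
  · rintro rfl
    exact hx0 (Subtype.ext (by simpa [Pi.zero_def] using hpx))
  · rwa [Set.mem_preimage, hmemB, hpx, Matrix.toLin'_apply] at hx

theorem exists_int_abs_sub_mul_sum_lt {ι : Type*} [Fintype ι] {l δ : ι → ℝ}
    (hl : ∑ i, l i ≠ 1) (hδ0 : ∀ i, 0 < δ i) (hδ1 : ∀ i, δ i ≤ 1)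
    (h : |1 - ∑ i, l i| < ∏ i, δ i) :
    ∃ p : ι → ℤ, 0 < ∑ i, p i ∧ ∀ i, |(p i : ℝ) - l i * ((∑ j, p j : ℤ) : ℝ)| < δ i := by
  classical
  let M : Matrix ι ι ℝ := 1 - Matrix.vecMulVec l 1
  have hdet : M.det = 1 - ∑ i, l i := by
    rw [show M = 1 - _ from rfl, Matrix.vecMulVec_eq Unit, Matrix.det_one_sub_mul_comm,
      Matrix.det_unique]
    simp [Matrix.mul_apply]
  have happ (p : ι → ℤ) (i : ι) : M.mulVec (fun j ↦ (p j : ℝ)) i =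
      p i - l i * ((∑ j, p j : ℤ) : ℝ) := by
    rw [show M = 1 - _ from rfl, Matrix.sub_mulVec, Matrix.vecMulVec_mulVec]
    simp [one_dotProduct]
  obtain ⟨p, hp0, hp⟩ := exists_int_ne_zero_abs_mulVec_lt
    (by rwa [hdet, sub_ne_zero, ne_comm]) hδ0 (by rwa [hdet])
  simp only [happ] at hp
  have hsum : ∑ i, p i ≠ 0 := by
    refine fun hsum ↦ hp0 (funext fun i ↦ Int.abs_lt_one_iff.1 ?_)
    have hpi : |(p i : ℝ)| < 1 := by simpa [hsum] using (hp i).trans_le (hδ1 i)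
    exact_mod_cast hpi
  rcases hsum.lt_or_gt with hneg | hpos
  · refine ⟨-p, by simpa using hneg, fun i ↦ ?_⟩
    rw [abs_sub_comm]
    convert! hp i using 2
    simp only [Pi.neg_apply, Finset.sum_neg_distrib, Int.cast_neg]
    ring
  · exact ⟨p, hpos, hp⟩

end GeometryOfNumbers

section Weights

variable {ι : Type*}

theorem sum_le_of_forall_exists_le_half_pow {f : ι → ℝ} {c : ℝ} {U : Finset ι}
    (h : ∀ V ⊆ U, V.Nonempty → ∃ i ∈ V, f i ≤ c * (1 / 2) ^ V.card) :
    ∑ i ∈ U, f i ≤ c * (1 - (1 / 2) ^ U.card) := by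
  classical
  induction U using Finset.strongInduction with
  | H U ih =>
    obtain rfl | hU := U.eq_empty_or_nonempty
    · simp
    obtain ⟨m, hmU, hm⟩ := h U subset_rfl hU
    have hrest := ih _ (Finset.erase_ssubset hmU) fun V hV ↦ h V (hV.trans (U.erase_subset m))
    rw [← Finset.card_erase_add_one hmU, pow_succ] at hm ⊢
    rw [← Finset.sum_erase_add _ _ hmU]
    linarith

theorem exists_subset_forall_mul_half_pow_lt {f : ι → ℝ} {c : ℝ} (hc : 0 < c) {U : Finset ι}
    (h : c ≤ ∑ i ∈ U, f i) :
    ∃ V ⊆ U, V.Nonempty ∧ ∀ i ∈ V, c * (1 / 2) ^ V.card < f i := by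
  classical
  contrapose! h
  refine (sum_le_of_forall_exists_le_half_pow h).trans_lt (mul_lt_of_lt_one_right hc ?_)
  exact sub_lt_self _ (by positivity)

theorem sq_add_two_le_two_mul_two_pow (s : ℕ) : s ^ 2 + 2 ≤ 2 * 2 ^ s := by
  induction s with
  | zero => norm_num
  | succ s ih =>
    have := s.lt_two_pow_self
    rw [pow_succ 2 s]
    nlinarith

theorem inv_pow_le_mul_pow {D P : ℝ} (hD : 1 ≤ D) {t s : ℕ}
    (hP : ((4 * D) ^ (2 ^ t - 1))⁻¹ ≤ P) :
    ((4 * D) ^ (2 ^ (t + s) - 1))⁻¹ ≤ P * (P / D * (1 / 2) ^ s) ^ s := by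
  set A := (4 * D) ^ (2 ^ t - 1) with hA
  have hA1 : 1 ≤ A := one_le_pow₀ (by linarith)
  have hP0 : 0 ≤ P := le_trans (by positivity) hP
  have hs : s + 1 ≤ 2 ^ s := s.lt_two_pow_self
  have hsq : s * s ≤ 2 * (2 ^ s - 1) := by
    have := sq_add_two_le_two_mul_two_pow s
    rw [sq] at this
    lia
  have hexp : 2 ^ (t + s) - 1 = (2 ^ t - 1) * 2 ^ s + (2 ^ s - 1) := by
    zify [Nat.one_le_two_pow]
    ring
  calc
    ((4 * D) ^ (2 ^ (t + s) - 1))⁻¹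
        = (A ^ 2 ^ s * (D ^ (2 ^ s - 1) * 2 ^ (2 * (2 ^ s - 1))))⁻¹ := by
      rw [hexp, pow_add, pow_mul, ← hA, mul_pow 4 D, pow_mul 2 2, mul_comm (D ^ _)]
      norm_num
    _ ≤ (A ^ (s + 1) * (D ^ s * 2 ^ (s * s)))⁻¹ := by
      gcongr
      · lia
      · norm_num
    _ = A⁻¹ * (A⁻¹ / D * (1 / 2) ^ s) ^ s := by
      simp only [pow_succ, pow_mul, mul_pow, inv_pow, mul_inv, div_eq_mul_inv]
      ring
    _ ≤ P * (P / D * (1 / 2) ^ s) ^ s := by gcongr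

theorem inv_pow_le_prod_of_prod_le_mul_sum_compl [Fintype ι] [DecidableEq ι] {x : ι → ℝ}
    (hx : ∀ i, 0 < x i) {D : ℝ} (hD : 1 ≤ D)
    (h : ∀ T : Finset ι, T ≠ Finset.univ → ∏ i ∈ T, x i ≤ D * ∑ i ∈ Tᶜ, x i) :
    ((4 * D) ^ (2 ^ Fintype.card ι - 1))⁻¹ ≤ ∏ i, x i := by
  let J : Finset ι → Prop := fun T ↦ ((4 * D) ^ (2 ^ T.card - 1))⁻¹ ≤ ∏ i ∈ T, x i
  -- A maximal `T` with `J T` is everything: otherwise the values on some nonempty `V` outside `T`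
  -- are so large that `J (T ∪ V)` holds as well.
  obtain ⟨T, -, hT⟩ := (Set.toFinite {T | J T}).exists_le_maximal (a := ∅) (by simp [J])
  suffices T = Finset.univ by simpa [J, this] using hT.prop
  by_contra hne
  have hpos : 0 < ∏ i ∈ T, x i := Finset.prod_pos fun i _ ↦ hx i
  have hD0 : 0 < D := by linarith
  obtain ⟨V, hV, hVne, hVx⟩ := exists_subset_forall_mul_half_pow_lt (div_pos hpos hD0)
    ((div_le_iff₀' hD0).2 (h T hne))
  have hdisj : Disjoint T V := Finset.disjoint_left.2 fun i hiT hiV ↦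
    Finset.mem_compl.1 (hV hiV) hiT
  have hJ : J (T ∪ V) := by
    simp only [J, Finset.card_union_of_disjoint hdisj, Finset.prod_union hdisj]
    refine (inv_pow_le_mul_pow hD hT.prop).trans ?_
    gcongr
    rw [← Finset.prod_const]
    exact Finset.prod_le_prod (fun _ _ ↦ by positivity) fun i hi ↦ (hVx i hi).le
  obtain ⟨i, hi⟩ := hVne
  exact Finset.mem_compl.1 (hV hi)
    (hT.le_of_ge hJ Finset.subset_union_left (Finset.mem_union_right _ hi))

end Weights

section Convex

universe u

theorem exists_pos_forall_pos_add_mul {ι : Type*} [Finite ι] {w : ι → ℝ} (hw : ∀ i, 0 < w i)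
    (g : ι → ℝ) : ∃ η > 0, ∀ i, 0 < w i + η * g i := by
  have hnear : ∀ᶠ η in nhds (0 : ℝ), ∀ i, 0 < w i + η * g i := by
    refine Filter.eventually_all.2 fun i ↦ ContinuousAt.eventually_lt ?_ ?_ ?_
    · fun_prop
    · fun_prop
    · simpa using hw i
  exact hnear.exists_gt

theorem exists_pos_add_smul_sub_mem {E ι : Type*} [AddCommGroup E] [Module ℝ E] [Fintype ι]
    {P : Set E} (hP : Convex ℝ P) {v : ι → E} (hv : ∀ i, v i ∈ P) {w : ι → ℝ}
    (hw : ∀ i, 0 < w i) (hw1 : ∑ i, w i = 1) {y : E} (hy : y ∈ affineSpan ℝ (Set.range v)) :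
    ∃ η > (0 : ℝ), ∑ i, w i • v i + η • (∑ i, w i • v i - y) ∈ P := by
  obtain ⟨g, hg1, rfl⟩ := eq_affineCombination_of_mem_affineSpan_of_fintype hy
  obtain ⟨η, hη, hpos⟩ := exists_pos_forall_pos_add_mul hw (w - g)
  refine ⟨η, hη, ?_⟩
  rw [Finset.affineCombination_eq_linear_combination _ _ _ hg1, ← Finset.sum_sub_distrib,
    Finset.smul_sum, ← Finset.sum_add_distrib]
  simp only [← sub_smul, smul_smul, ← add_smul]
  refine hP.sum_mem (fun i _ ↦ (hpos i).le) ?_ fun i _ ↦ hv i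
  rw [Finset.sum_add_distrib, ← Finset.mul_sum, Finset.sum_sub_distrib, hw1, hg1]
  ring

theorem sum_smul_mem_affineSpan {E ι : Type*} [AddCommGroup E] [Module ℝ E] [Fintype ι]
    (v : ι → E) {w : ι → ℝ} (hw1 : ∑ i, w i = 1) :
    ∑ i, w i • v i ∈ affineSpan ℝ (Set.range v) := by
  rw [← Finset.affineCombination_eq_linear_combination _ _ _ hw1]
  exact affineCombination_mem_affineSpan hw1 v

theorem sum_smul_mem_interior {E ι : Type*} [AddCommGroup E] [Module ℝ E] [TopologicalSpace E]
    [IsTopologicalAddGroup E] [ContinuousConstSMul ℝ E] [Fintype ι] {P : Set E}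
    (hP : Convex ℝ P) {v : ι → E} (hv : ∀ i, v i ∈ P) {w : ι → ℝ} (hw : ∀ i, 0 < w i)
    (hw1 : ∑ i, w i = 1) {x : E} (hx : x ∈ interior P)
    (hxv : x ∈ affineSpan ℝ (Set.range v)) : ∑ i, w i • v i ∈ interior P := by
  obtain ⟨η, hη, hmem⟩ := exists_pos_add_smul_sub_mem hP hv hw hw1 hxv
  convert! hP.combo_interior_self_mem_interior hx hmem (a := η / (1 + η)) (b := 1 / (1 + η))
    (by positivity) (by positivity) (by field_simp; ring) using 1
  match_scalars
  · field_simp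
  · field_simp
    ring

theorem exists_isGreatest_add_smul_mem {E : Type*} [AddCommGroup E] [Module ℝ E]
    [TopologicalSpace E] [IsTopologicalAddGroup E] [ContinuousSMul ℝ E] [T2Space E] {P : Set E}
    (hP : IsCompact P) {x : E} (hx : x ∈ interior P) {d : E} (hd : d ≠ 0) :
    ∃ c > 0, IsGreatest {c : ℝ | x + c • d ∈ P} c := by
  have hline : Topology.IsClosedEmbedding fun c : ℝ ↦ x + c • d :=
    (Homeomorph.addLeft x).isClosedEmbedding.comp (isClosedEmbedding_smul_left hd)
  have hnear : ∀ᶠ c in nhds (0 : ℝ), x + c • d ∈ P :=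
    hline.continuous.continuousAt.eventually_mem (by simpa using mem_interior_iff_mem_nhds.1 hx)
  obtain ⟨c₀, hc₀, hmem⟩ := hnear.exists_gt
  obtain ⟨c, hc⟩ := (hline.isCompact_preimage hP).exists_isGreatest ⟨c₀, hmem⟩
  exact ⟨c, hc₀.trans_le (hc.2 hmem), hc⟩

theorem affineIndependent_option_elim {E ι : Type*} [AddCommGroup E] [Module ℝ E] {z : ι → E}
    (hz : AffineIndependent ℝ z) {s : E} (hs : s ∉ affineSpan ℝ (Set.range z)) :
    AffineIndependent ℝ fun i : Option ι ↦ i.elim s z := by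
  have hne : {i : Option ι | i ≠ none} = Set.range some := by
    ext i
    cases i <;> simp
  refine AffineIndependent.affineIndependent_of_notMem_span (i := none) ?_ ?_
  · refine (affineIndependent_equiv
      ((Equiv.ofInjective _ (Option.some_injective ι)).trans (Equiv.setCongr hne.symm))).1 ?_
    exact hz
  · rwa [hne, ← Set.range_comp]

theorem add_smul_sub_mem_of_mul_one_sub_le {E ι : Type*} [AddCommGroup E] [Module ℝ E]
    [Fintype ι] {P : Set E} (hP : Convex ℝ P) {v : ι → E} (hv : ∀ i, v i ∈ P) {w : ι → ℝ}
    (hw : ∀ i, 0 ≤ w i) (hw1 : ∑ i, w i = 1) {c : ℝ} (hc : 0 ≤ c) {i : ι}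
    (hci : c * (1 - w i) ≤ w i) :
    ∑ j, w j • v j + c • (∑ j, w j • v j - v i) ∈ P := by
  classical
  have heq : ∑ j, w j • v j + c • (∑ j, w j • v j - v i) =
      ∑ j, (w j + c * (w j - if j = i then 1 else 0)) • v j := by
    simp [add_smul, mul_smul, sub_smul, Finset.sum_add_distrib, ← Finset.smul_sum]
  rw [heq]
  refine hP.sum_mem (fun j _ ↦ ?_) ?_ fun j _ ↦ hv j
  · split_ifs with hj
    · subst hj
      linarith
    · rw [sub_zero]
      have := hw j
      positivity
  · rw [Finset.sum_add_distrib, ← Finset.mul_sum, Finset.sum_sub_distrib, hw1,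
      Finset.sum_ite_eq' _ i, if_pos (Finset.mem_univ i)]
    ring

theorem notMem_affineSpan_of_isGreatest {E ι : Type*} [AddCommGroup E] [Module ℝ E] [Fintype ι]
    {P : Set E} (hP : Convex ℝ P) {v : ι → E} (hv : ∀ i, v i ∈ P) {w : ι → ℝ}
    (hw : ∀ i, 0 < w i) (hw1 : ∑ i, w i = 1) {x s : E} {c : ℝ}
    (hwv : ∑ i, w i • v i = x + c • (x - s)) (hc : 0 ≤ c)
    (hgreatest : IsGreatest {c : ℝ | x + c • (x - s) ∈ P} c) :
    s ∉ affineSpan ℝ (Set.range v) := by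
  intro hs
  obtain ⟨η, hη, hmem⟩ := exists_pos_add_smul_sub_mem hP hv hw hw1 hs
  have hfar : x + (c + η * (1 + c)) • (x - s) =
      ∑ i, w i • v i + η • (∑ i, w i • v i - s) := by
    rw [hwv]
    module
  have hle : c + η * (1 + c) ≤ c := hgreatest.2 (show _ ∈ P from hfar ▸ hmem)
  nlinarith

theorem exists_pos_convex_span_of_mem_interior_convexHull {E : Type u} [AddCommGroup E]
    [Module ℝ E] [TopologicalSpace E] [IsTopologicalAddGroup E] [ContinuousSMul ℝ E] [T2Space E]
    {S : Set E} (hS : IsCompact (convexHull ℝ S)) {x s : E} (hx : x ∈ interior (convexHull ℝ S))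
    (hs : s ∈ S) :
    ∃ (ι : Type u) (_ : Fintype ι) (v : ι → E) (w : ι → ℝ) (i : ι), v i = s ∧
      Set.range v ⊆ S ∧ AffineIndependent ℝ v ∧ (∀ i, 0 < w i) ∧ ∑ i, w i = 1 ∧
      ∑ i, w i • v i = x := by
  obtain rfl | hxs := eq_or_ne x s
  · exact ⟨PUnit, inferInstance, fun _ ↦ x, 1, PUnit.unit, rfl, by simpa using hs,
      affineIndependent_of_subsingleton ℝ _, by simp, by simp, by simp⟩
  obtain ⟨c, hc, hgreatest⟩ := exists_isGreatest_add_smul_mem hS hx (sub_ne_zero.2 hxs)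
  obtain ⟨κ, _, z, w, hzS, hz, hw, hw1, hwz⟩ :=
    eq_pos_convex_span_of_mem_convexHull (𝕜 := ℝ) hgreatest.1
  have hsz := notMem_affineSpan_of_isGreatest (convex_convexHull ℝ S)
    (fun i ↦ subset_convexHull ℝ S (hzS ⟨i, rfl⟩)) hw hw1 hwz hc.le hgreatest
  refine ⟨Option κ, inferInstance, fun i ↦ i.elim s z,
    fun i ↦ i.elim (c / (1 + c)) fun i ↦ w i / (1 + c), none, rfl, ?_,
    affineIndependent_option_elim hz hsz, ?_, ?_, ?_⟩
  · rintro _ ⟨_ | i, rfl⟩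
    exacts [hs, hzS ⟨i, rfl⟩]
  · rintro (_ | i)
    · exact div_pos hc (by positivity)
    · exact div_pos (hw i) (by positivity)
  · simp only [Fintype.sum_option, Option.elim, ← Finset.sum_div, hw1]
    field_simp
    ring
  · simp only [Fintype.sum_option, Option.elim, div_eq_inv_mul, mul_smul, ← Finset.smul_sum, hwz]
    match_scalars
    · field_simp
      ring
    · field_simp

end Convex

section LatticePolytope

theorem exists_int_forall_pos_add_mul {ι : Type*} [Fintype ι] [DecidableEq ι] {w : ι → ℝ}
    (hw : ∀ i, 0 < w i) (hw1 : ∑ i, w i = 1) {T : Finset ι} (hT : T ≠ Finset.univ) {D : ℝ}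
    (hD : 1 ≤ D) (h : ∑ i ∈ Tᶜ, w i < ∏ i ∈ T, w i / D) :
    ∃ p : ι → ℤ, (∃ i, w i * (∑ j, p j : ℤ) - p i ≠ 0) ∧
      ∀ t, 0 ≤ t → t ≤ D → ∀ i, 0 < w i + t * (w i * (∑ j, p j : ℤ) - p i) := by
  have hD0 : 0 < D := by linarith
  have hwle (i : ι) : w i ≤ 1 :=
    hw1 ▸ Finset.single_le_sum (fun j _ ↦ (hw j).le) (Finset.mem_univ i)
  obtain ⟨i₀, hi₀⟩ : ∃ i, i ∉ T := by simpa [Finset.eq_univ_iff_forall] using hT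
  have hcompl : 0 < ∑ i ∈ Tᶜ, w i :=
    Finset.sum_pos (fun i _ ↦ hw i) ⟨i₀, Finset.mem_compl.2 hi₀⟩
  have hsum : ∑ i, (if i ∈ T then w i else 0) = 1 - ∑ i ∈ Tᶜ, w i := by
    rw [← hw1, ← Finset.sum_add_sum_compl T w, add_sub_cancel_right, Finset.sum_ite_mem,
      Finset.univ_inter]
  -- Off `T` the tolerance `1` around `0` forces `p i = 0`.
  obtain ⟨p, hq, hp⟩ := exists_int_abs_sub_mul_sum_lt (l := fun i ↦ if i ∈ T then w i else 0)
    (δ := fun i ↦ if i ∈ T then w i / D else 1) (by rw [hsum]; linarith)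
    (fun i ↦ by have := hw i; split_ifs <;> positivity)
    (fun i ↦ by
      split_ifs
      · exact (div_le_self (hw i).le hD).trans (hwle i)
      · exact le_rfl)
    (by rwa [hsum, sub_sub_cancel, abs_of_pos hcompl, Finset.prod_ite_mem, Finset.univ_inter])
  have hoff (i : ι) (hi : i ∉ T) : 0 < w i * (∑ j, p j : ℤ) - p i := by
    have hlt : |(p i : ℝ)| < 1 := by simpa [hi] using hp i
    have hpi : p i = 0 := Int.abs_lt_one_iff.1 (by exact_mod_cast hlt)
    rw [hpi, Int.cast_zero, sub_zero]
    exact mul_pos (hw i) (by exact_mod_cast hq)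
  refine ⟨p, ⟨i₀, (hoff i₀ hi₀).ne'⟩, fun t ht0 htD i ↦ ?_⟩
  by_cases hi : i ∈ T
  · set g := w i * (∑ j, p j : ℤ) - p i
    have hg : |g| < w i / D :=
      (abs_sub_comm _ _).trans_lt (by simpa only [hi, if_true] using hp i)
    have htg : t * |g| < w i :=
      calc
        t * |g| ≤ D * |g| := by gcongr
        _ < D * (w i / D) := by gcongr
        _ = w i := mul_div_cancel₀ _ hD0.ne'
    have := mul_le_mul_of_nonneg_left (neg_abs_le g) ht0
    linarith
  · exact add_pos_of_pos_of_nonneg (hw i) (mul_nonneg ht0 (hoff i hi).le)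

theorem one_le_mul_of_encard_le {α : Type*} {A : Set α} (hA : A.Nonempty) {a k : ℕ}
    (hcard : A.encard ≤ k) (ha : 0 < a) : (1 : ℝ) ≤ k * a := by
  have hk : 1 ≤ k := by exact_mod_cast (Set.one_le_encard_iff_nonempty.2 hA).trans hcard
  exact_mod_cast Nat.mul_pos hk ha

theorem exists_add_smul_notMem {E : Type*} [AddCommGroup E] [Module ℝ E] {Λ : AddSubgroup E}
    {A : Set E} {a k : ℕ} (ha : 0 < a) (hcard : (A ∩ (a • Λ : AddSubgroup E)).encard ≤ k)
    {x d : E} (hx : x ∈ a • Λ) (hd : d ∈ Λ) (hd0 : d ≠ 0) :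
    ∃ t : ℝ, 0 ≤ t ∧ t ≤ k * a ∧ x + t • d ∉ A := by
  by_contra! hA
  have hinj : Function.Injective fun j : ℕ ↦ x + (j * a : ℝ) • d := fun i j hij ↦
    Nat.cast_injective (mul_left_injective₀ (by exact_mod_cast ha.ne')
      (smul_left_injective ℝ hd0 (add_left_cancel hij)))
  have hmaps : Set.MapsTo (fun j : ℕ ↦ x + (j * a : ℝ) • d) (Finset.range (k + 1))
      (A ∩ (a • Λ : AddSubgroup E)) := by
    intro j hj
    have hjk : j ≤ k := Finset.mem_range_succ_iff.1 hj
    refine ⟨hA _ (by positivity) (by gcongr), ?_⟩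
    simp only [mul_smul, Nat.cast_smul_eq_nsmul]
    exact add_mem hx (nsmul_mem (AddSubgroup.smul_mem_pointwise_smul _ _ _ hd) _)
  have hle := (Set.encard_le_encard_of_injOn hmaps hinj.injOn).trans hcard
  rw [Set.encard_coe_eq_coe_finsetCard, Finset.card_range, Nat.cast_le] at hle
  lia

variable {E : Type*} [AddCommGroup E] [Module ℝ E] [TopologicalSpace E] [IsTopologicalAddGroup E]
  [ContinuousSMul ℝ E]

theorem prod_div_le_sum_compl_of_sum_smul_mem_interior {ι : Type*} [Fintype ι] [DecidableEq ι]
    {Λ : AddSubgroup E} {P : Set E} (hP : Convex ℝ P) {a k : ℕ} (ha : 0 < a)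
    (hcard : (interior P ∩ (a • Λ : AddSubgroup E)).encard ≤ k) {v : ι → E}
    (hvP : ∀ i, v i ∈ P) (hvΛ : ∀ i, v i ∈ Λ) (hv : AffineIndependent ℝ v) {w : ι → ℝ}
    (hw : ∀ i, 0 < w i) (hw1 : ∑ i, w i = 1)
    (hx : ∑ i, w i • v i ∈ interior P ∩ (a • Λ : AddSubgroup E)) {T : Finset ι}
    (hT : T ≠ Finset.univ) :
    ∏ i ∈ T, w i / (k * a) ≤ ∑ i ∈ Tᶜ, w i := by
  by_contra! hlt
  have hD : (1 : ℝ) ≤ k * a := one_le_mul_of_encard_le ⟨_, hx⟩ hcard ha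
  obtain ⟨p, ⟨i₀, hi₀⟩, hpos⟩ := exists_int_forall_pos_add_mul hw hw1 hT hD hlt
  set q : ℤ := ∑ j, p j with hq
  set x : E := ∑ i, w i • v i with hx_def
  have hxΛ : x ∈ Λ := by
    obtain ⟨y, hy, hyx⟩ := AddSubgroup.mem_smul_pointwise_iff_exists _ _ _ |>.1 hx.2
    exact hyx ▸ nsmul_mem hy a
  let d : E := q • x - ∑ i, p i • v i
  have hdΛ : d ∈ Λ := sub_mem (zsmul_mem hxΛ q) (sum_mem fun i _ ↦ zsmul_mem (hvΛ i) _)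
  have hd_sum : d = ∑ i, (w i * q - p i) • v i := by
    simp only [d, hx_def, sub_smul, Finset.sum_sub_distrib, Finset.smul_sum, mul_comm _ (q : ℝ),
      mul_smul, Int.cast_smul_eq_zsmul]
  have hcoeff : ∑ i, (w i * q - p i) = 0 := by
    rw [Finset.sum_sub_distrib, ← Finset.sum_mul, hw1, one_mul, hq, Int.cast_sum, sub_self]
  have hd : d ≠ 0 := fun hd0 ↦
    hi₀ (affineIndependent_iff.1 hv Finset.univ _ hcoeff (hd_sum ▸ hd0) i₀ (Finset.mem_univ _))
  obtain ⟨t, ht0, htD, ht⟩ := exists_add_smul_notMem ha hcard hx.2 hdΛ hd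
  have hpoint : x + t • d = ∑ i, (w i + t * (w i * q - p i)) • v i := by
    simp only [hd_sum, hx_def, add_smul, Finset.sum_add_distrib, Finset.smul_sum, mul_smul]
  refine ht (hpoint ▸ sum_smul_mem_interior hP hvP (hpos t ht0 htD) ?_ hx.1
    (sum_smul_mem_affineSpan v hw1))
  rw [Finset.sum_add_distrib, ← Finset.mul_sum, hcoeff, hw1, mul_zero, add_zero]

theorem inv_pow_le_of_sum_smul_mem_interior {ι : Type*} [Fintype ι] [FiniteDimensional ℝ E]
    {Λ : AddSubgroup E} {P : Set E} (hP : Convex ℝ P) {a k : ℕ} (ha : 0 < a)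
    (hcard : (interior P ∩ (a • Λ : AddSubgroup E)).encard ≤ k) {v : ι → E}
    (hvP : ∀ i, v i ∈ P) (hvΛ : ∀ i, v i ∈ Λ) (hv : AffineIndependent ℝ v) {w : ι → ℝ}
    (hw : ∀ i, 0 < w i) (hw1 : ∑ i, w i = 1)
    (hx : ∑ i, w i • v i ∈ interior P ∩ (a • Λ : AddSubgroup E)) (i : ι) :
    ((4 * (k * a : ℝ)) ^ 2 ^ (finrank ℝ E + 1))⁻¹ ≤ w i := by
  classical
  have hD : (1 : ℝ) ≤ k * a := one_le_mul_of_encard_le ⟨_, hx⟩ hcard ha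
  have hD0 : (0 : ℝ) < k * a := by linarith
  have hcardι : Fintype.card ι ≤ finrank ℝ E + 1 :=
    hv.card_le_finrank_succ.trans (Nat.succ_le_succ (Submodule.finrank_le _))
  have hle (i : ι) : w i / (k * a) ≤ 1 :=
    (div_le_self (hw i).le hD).trans
      (hw1 ▸ Finset.single_le_sum (fun j _ ↦ (hw j).le) (Finset.mem_univ i))
  calc
    ((4 * (k * a : ℝ)) ^ 2 ^ (finrank ℝ E + 1))⁻¹
        ≤ ((4 * (k * a : ℝ)) ^ (2 ^ Fintype.card ι - 1))⁻¹ := by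
      gcongr
      · linarith
      · exact (Nat.sub_le _ _).trans (Nat.pow_le_pow_right two_pos hcardι)
    _ ≤ ∏ j, w j / (k * a) := by
      refine inv_pow_le_prod_of_prod_le_mul_sum_compl (fun j ↦ div_pos (hw j) hD0) hD
        fun T hT ↦ ?_
      rw [← Finset.sum_div, mul_div_cancel₀ _ hD0.ne']
      exact prod_div_le_sum_compl_of_sum_smul_mem_interior hP ha hcard hvP hvΛ hv hw hw1 hx hT
    _ ≤ w i / (k * a) := by
      rw [← Finset.mul_prod_erase _ _ (Finset.mem_univ i)]
      exact mul_le_of_le_one_right (by have := hw i; positivity)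
        (Finset.prod_le_one (fun j _ ↦ by have := hw j; positivity) fun j _ ↦ hle j)
    _ ≤ w i := div_le_self (hw i).le hD

theorem add_smul_sub_mem_convexHull [FiniteDimensional ℝ E] [T2Space E]
    {Λ : AddSubgroup E} {S : Set E} (hS : S.Finite) (hSΛ : S ⊆ Λ) {a k : ℕ} (ha : 0 < a)
    (hcard : (interior (convexHull ℝ S) ∩ (a • Λ : AddSubgroup E)).encard ≤ k) {x : E}
    (hx : x ∈ interior (convexHull ℝ S) ∩ (a • Λ : AddSubgroup E)) {ε : ℝ} (hε : 0 < ε)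
    (hε1 : ε < 1) (hεle : ε ≤ ((4 * (k * a : ℝ)) ^ 2 ^ (finrank ℝ E + 1))⁻¹) {u : E}
    (hu : u ∈ convexHull ℝ S) :
    x + (ε / (1 - ε)) • (x - u) ∈ convexHull ℝ S := by
  have hQ : Convex ℝ (convexHull ℝ S) := convex_convexHull ℝ S
  have hhom (y : E) : AffineMap.homothety x (-(ε / (1 - ε))) y = x + (ε / (1 - ε)) • (x - y) := by
    rw [AffineMap.homothety_apply, vsub_eq_sub, vadd_eq_add, neg_smul, ← smul_neg, neg_sub,
      add_comm]
  suffices S ⊆ AffineMap.homothety x (-(ε / (1 - ε))) ⁻¹' convexHull ℝ S from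
    hhom u ▸ convexHull_min this (hQ.affine_preimage _) hu
  intro s hs
  rw [Set.mem_preimage, hhom]
  obtain ⟨ι, _, v, w, i, rfl, hvS, hv, hw, hw1, rfl⟩ :=
    exists_pos_convex_span_of_mem_interior_convexHull (hS.isCompact_convexHull ℝ) hx.1 hs
  have hvQ (j : ι) : v j ∈ convexHull ℝ S := subset_convexHull ℝ S (hvS ⟨j, rfl⟩)
  have hεw : ε ≤ w i :=
    hεle.trans (inv_pow_le_of_sum_smul_mem_interior hQ ha hcard hvQ
      (fun j ↦ hSΛ (hvS ⟨j, rfl⟩)) hv hw hw1 hx i)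
  have h1ε : 0 < 1 - ε := by linarith
  refine add_smul_sub_mem_of_mul_one_sub_le hQ hvQ (fun j ↦ (hw j).le) hw1 (by positivity) ?_
  rw [div_mul_eq_mul_div, div_le_iff₀ h1ε]
  linarith

theorem add_smul_sub_mem_interior_convexHull [FiniteDimensional ℝ E] [T2Space E]
    {Λ : AddSubgroup E} {S : Set E} (hS : S.Finite) (hSΛ : S ⊆ Λ) {a k : ℕ} (ha : 0 < a)
    (hcard : (interior (convexHull ℝ S) ∩ (a • Λ : AddSubgroup E)).encard ≤ k) {x : E}
    (hx : x ∈ interior (convexHull ℝ S) ∩ (a • Λ : AddSubgroup E)) {ε : ℝ} (hε : 0 < ε)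
    (hε1 : ε < 1) (hεle : ε ≤ ((4 * (k * a : ℝ)) ^ 2 ^ (finrank ℝ E + 1))⁻¹) {u u' : E}
    (hu : u ∈ interior (convexHull ℝ S)) (hu' : u' ∈ convexHull ℝ S) :
    x + ε • (u - u') ∈ interior (convexHull ℝ S) := by
  have h1ε : 0 < 1 - ε := by linarith
  have hmem := add_smul_sub_mem_convexHull hS hSΛ ha hcard hx hε hε1 hεle hu'
  convert! (convex_convexHull ℝ S).combo_interior_self_mem_interior hu hmem hε h1ε.le
    (add_sub_cancel ε 1) using 1
  match_scalars
  · field_simp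
    ring
  · field_simp
  · field_simp

end LatticePolytope

theorem stmt11_general {E : Type*} [NormedAddCommGroup E] [NormedSpace ℝ E]
    [FiniteDimensional ℝ E] [MeasurableSpace E] [BorelSpace E] {μ : Measure E}
    [μ.IsAddHaarMeasure] {Λ : AddSubgroup E} [Countable Λ] {F : Set E}
    (hF : IsAddFundamentalDomain Λ F μ) {a k : ℕ} (ha : 0 < a) {S : Set E} (hS : S.Finite)
    (hSΛ : S ⊆ Λ) (hne : (interior (convexHull ℝ S) ∩ (a • Λ : AddSubgroup E)).Nonempty)
    (hcard : (interior (convexHull ℝ S) ∩ (a • Λ : AddSubgroup E)).encard ≤ k) :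
    μ (convexHull ℝ S) ≤
      ENNReal.ofReal (k * a ^ finrank ℝ E *
        (4 * (k * a)) ^ (finrank ℝ E * 2 ^ (finrank ℝ E + 1))) * μ F := by
  obtain ⟨x, hx⟩ := hne
  have hD : (1 : ℝ) ≤ k * a := one_le_mul_of_encard_le ⟨x, hx⟩ hcard ha
  set ε : ℝ := ((4 * (k * a : ℝ)) ^ 2 ^ (finrank ℝ E + 1))⁻¹ with hε_def
  have hε : 0 < ε := by positivity
  have hε1 : ε < 1 := inv_lt_one_of_one_lt₀ (one_lt_pow₀ (by linarith) (by positivity))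
  have hpack := measure_le_of_forall_add_smul_sub_mem hF ha hcard hx.2
    isOpen_interior.measurableSet hε
    fun u hu u' hu' ↦ add_smul_sub_mem_interior_convexHull hS hSΛ ha hcard hx hε hε1 le_rfl hu
      (interior_subset hu')
  rw [← measure_interior_of_null_frontier ((convex_convexHull ℝ S).addHaar_frontier μ)]
  convert! hpack using 3
  rw [hε_def, div_inv_eq_mul, mul_pow (a : ℝ), ← pow_mul, mul_comm (2 ^ _), mul_assoc]

/-- The theorem of Lagarias and Ziegler (Theorem 3.9).  Let `n, a, k ≥ 1` and let
`Q ⊆ ℝⁿ` be a convex polytope all of whose vertices lie in `ℤⁿ`, whose interior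
contains exactly `k` points of the sublattice `a·ℤⁿ`.  Then
`vol(Q) ≤ k·aⁿ·(7(ka+1))^(n·2^(n+1))`. -/
theorem stmt11 (n a k : ℕ) (hn : 0 < n) (ha : 0 < a) (hk : 0 < k)
    (S : Finset (Fin n → ℝ))
    (hSlat : ∀ s ∈ S, ∀ i, ∃ m : ℤ, s i = (m : ℝ))
    (Q : Set (Fin n → ℝ)) (hQ : Q = convexHull ℝ (S : Set (Fin n → ℝ)))
    (hint : Set.ncard {u ∈ interior Q | ∀ i, ∃ m : ℤ, u i = (a : ℝ) * (m : ℝ)} = k) :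
    MeasureTheory.volume Q ≤
      ENNReal.ofReal ((k : ℝ) * (a : ℝ) ^ n *
        (7 * ((k : ℝ) * (a : ℝ) + 1)) ^ (n * 2 ^ (n + 1))) := by
  subst hQ
  have hset : {u ∈ interior (convexHull ℝ (S : Set (Fin n → ℝ))) |
      ∀ i, ∃ m : ℤ, u i = (a : ℝ) * (m : ℝ)} =
      interior (convexHull ℝ S) ∩ (a • integerLattice (Fin n) : AddSubgroup (Fin n → ℝ)) := by
    ext u
    exact and_congr_right' mem_nsmul_integerLattice.symm
  rw [hset] at hint
  have hle := stmt11_general (isAddFundamentalDomain_integerLattice (Fin n)) ha S.finite_toSet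
    (fun s hs ↦ mem_integerLattice.2 (hSlat s hs))
    (Set.nonempty_of_ncard_ne_zero (hint ▸ hk.ne'))
    (Set.encard_le_coe_iff_finite_ncard_le.2
      ⟨Set.finite_of_ncard_pos (hint ▸ hk), hint.le⟩)
  rw [volume_fundamentalDomain_basisFun, mul_one, finrank_fin_fun] at hle
  refine hle.trans (ENNReal.ofReal_le_ofReal ?_)
  gcongr <;> linarith
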